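/- Let L = { a + b·ω : a, b ∈ ℤ } ⊂ ℂ with ω = exp(iπ/3) be the triangular lattice, so that each v ∈ L has the six neighbors v + ω^k, k = 0,…,5, in cyclic order. For ρ : L → (0,∞) define the angle sum Θ_ρ(v) = Σ_{k=0}^{5} arccos( 1 − 2ρ(v+ω^k)ρ(v+ω^{k+1}) / ((ρ(v)+ρ(v+ω^k))(ρ(v)+ρ(v+ω^{k+1}))) ), indices k taken mod 6. If ρ : L → (0,∞) satisfies Θ_ρ(v) ≥ 2π for every v ∈ L and ρ is bounded above, then ρ is constant. -/

import Mathlib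

open Real Set

/-- `ω = exp(iπ/3)`, a primitive sixth root of unity. -/
noncomputable def hexω : ℂ := Complex.exp ((Real.pi / 3 : ℂ) * Complex.I)

/-- The triangular lattice `L = {a + b·ω : a, b ∈ ℤ} ⊂ ℂ`. -/
def hexLattice : Set ℂ := {z | ∃ a b : ℤ, z = (a : ℂ) + (b : ℂ) * hexω}

/-- The angle sum of the label `ρ` at a vertex `v` of the triangular lattice:
the neighbors of `v` are `v + ω^k`, `k = 0, …, 5`, in cyclic order. -/
noncomputable def hexAngleSum (ρ : ℂ → ℝ) (v : ℂ) : ℝ :=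
  ∑ k ∈ Finset.range 6,
    Real.arccos (1 - 2 * ρ (v + hexω ^ k) * ρ (v + hexω ^ (k + 1)) /
      ((ρ v + ρ (v + hexω ^ k)) * (ρ v + ρ (v + hexω ^ (k + 1)))))

/-!
Weight the vertex inequality `0 ≤ Θ - 2π` by `φ² ρ`, with `φ` finitely supported, and regroup the
sum over the triangles of the packing. In a triangle with inradius `r`, the radius at a corner with
angle `α` is `r cot (α / 2)`, a strongly decreasing function of `α`, while the excesses
`δ = α - π / 3` of the three angles sum to zero. Hence each triangle contributes at most
`C M |∇φ|² - (r / 4) ∑ φ² δ²`, where `M` is an upper bound for `ρ`. Since `ℤ²` is parabolic, the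
Dirichlet energy of `φ` can be made arbitrarily small while `φ = 1` at a given vertex; logarithmic
cutoffs do this. Therefore every `δ` vanishes, all triangles are equilateral and `ρ` is constant.
-/

section ArctanEstimates

lemma lipschitzWith_arctan : LipschitzWith 1 arctan := by
  refine lipschitzWith_of_nnnorm_deriv_le differentiable_arctan fun x ↦ ?_
  have hx : 1 ≤ 1 + x ^ 2 := by nlinarith [sq_nonneg x]
  rw [← NNReal.coe_le_coe, coe_nnnorm, (hasDerivAt_arctan x).deriv,
    Real.norm_of_nonneg (by positivity)]
  exact div_le_one_of_le₀ hx (by positivity)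

lemma sq_arctan_sub_arctan_le (x y : ℝ) :
    (arctan x - arctan y) ^ 2 ≤ (x - y) * (arctan x - arctan y) := by
  have abs_le : |arctan x - arctan y| ≤ |x - y| := by
    simpa [Real.dist_eq] using lipschitzWith_arctan.dist_le_mul x y
  have same_sign : 0 ≤ (x - y) * (arctan x - arctan y) := by
    rcases le_total x y with h | h
    · exact mul_nonneg_of_nonpos_of_nonpos (sub_nonpos.2 h) (sub_nonpos.2 (arctan_mono h))
    · exact mul_nonneg (sub_nonneg.2 h) (sub_nonneg.2 (arctan_mono h))
  calc (arctan x - arctan y) ^ 2 = |arctan x - arctan y| * |arctan x - arctan y| := by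
        rw [abs_mul_abs_self, sq]
    _ ≤ |x - y| * |arctan x - arctan y| := by gcongr
    _ = (x - y) * (arctan x - arctan y) := by rw [← abs_mul, abs_of_nonneg same_sign]

lemma arctan_add_arctan_add_arctan_eq_pi_div_two {x y z : ℝ} (hx : 0 < x) (hy : 0 < y)
    (hz : 0 < z) (h : x * y + y * z + z * x = 1) :
    arctan x + arctan y + arctan z = π / 2 := by
  have hxy : x * y < 1 := by nlinarith [mul_pos hy hz, mul_pos hz hx]
  have hinv : (x + y) / (1 - x * y) = z⁻¹ := by
    rw [div_eq_iff (by linarith)]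
    field_simp
    linarith
  rw [arctan_add hxy, hinv, arctan_inv_of_pos hz]
  ring

end ArctanEstimates

/-- The angle at the `i`-th corner of the triangle spanned by the centers of three mutually
tangent circles of radii `R 0`, `R 1`, `R 2`; indices are cyclic, so `R (i + 1)` and `R (i + 2)`
are the other two radii. -/
noncomputable def cornerAngle (R : Fin 3 → ℝ) (i : Fin 3) : ℝ :=
  arccos (1 - 2 * R (i + 1) * R (i + 2) / ((R i + R (i + 1)) * (R i + R (i + 2))))

/-- The radius of the circle inscribed in the triangle spanned by the centers of three mutually
tangent circles of radii `R 0`, `R 1`, `R 2`, in Heron's form. -/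
noncomputable def inradius (R : Fin 3 → ℝ) : ℝ :=
  √((∏ i, R i) / ∑ i, R i)

/-- The amount by which the angle at the `i`-th corner exceeds that of an equilateral triangle. -/
noncomputable def angleExcess (R : Fin 3 → ℝ) (i : Fin 3) : ℝ :=
  cornerAngle R i - π / 3

/-- The gain term in the energy inequality for a triangle with radii `R` and weights `w i ^ 2` on
its corners: it measures how far the triangle is from being equilateral. -/
noncomputable def dissipation (R w : Fin 3 → ℝ) : ℝ :=
  inradius R / 4 * ∑ i, w i ^ 2 * angleExcess R i ^ 2

section Triangle

variable {R : Fin 3 → ℝ}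

lemma inradius_nonneg (R : Fin 3 → ℝ) : 0 ≤ inradius R :=
  sqrt_nonneg _

lemma inradius_pos (hR : ∀ i, 0 < R i) : 0 < inradius R := by
  have hsum : 0 < ∑ i, R i := Finset.sum_pos (fun i _ ↦ hR i) Finset.univ_nonempty
  exact sqrt_pos.2 (div_pos (Finset.prod_pos fun i _ ↦ hR i) hsum)

lemma inradius_sq (hR : ∀ i, 0 < R i) (i : Fin 3) :
    inradius R ^ 2 = R i * R (i + 1) * R (i + 2) / (R i + R (i + 1) + R (i + 2)) := by
  have hprod : ∏ j, R j = R i * R (i + 1) * R (i + 2) := by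
    fin_cases i <;> simp [Fin.prod_univ_three] <;> ring
  have hsum : ∑ j, R j = R i + R (i + 1) + R (i + 2) := by
    fin_cases i <;> simp [Fin.sum_univ_three] <;> ring
  have h₀ := hR i
  have h₁ := hR (i + 1)
  have h₂ := hR (i + 2)
  rw [inradius, hprod, hsum, sq_sqrt (by positivity)]

lemma inradius_le {M : ℝ} (hR : ∀ i, 0 < R i) (hM : ∀ i, R i ≤ M) : inradius R ≤ M := by
  have hM₀ : 0 < M := (hR 0).trans_le (hM 0)
  refine le_of_sq_le_sq ?_ hM₀.le
  rw [inradius_sq hR 0]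
  simp only [zero_add]
  have h₀ := hR 0
  have h₁ := hR 1
  have h₂ := hR 2
  rw [div_le_iff₀ (by positivity)]
  calc R 0 * R 1 * R 2 ≤ M * M * R 2 := by gcongr <;> exact hM _
    _ = M ^ 2 * R 2 := by ring
    _ ≤ M ^ 2 * (R 0 + R 1 + R 2) := by gcongr; linarith

/-- The incenter lies on the bisector of the angle. -/
lemma cornerAngle_eq_two_mul_arctan (hR : ∀ i, 0 < R i) (i : Fin 3) :
    cornerAngle R i = 2 * arctan (inradius R / R i) := by
  have h₀ := hR i
  have h₁ := hR (i + 1)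
  have h₂ := hR (i + 2)
  have arctan_pos : 0 < arctan (inradius R / R i) := by
    rw [← arctan_zero]
    exact arctan_strictMono (div_pos (inradius_pos hR) h₀)
  have arctan_lt := arctan_lt_pi_div_two (inradius R / R i)
  rw [cornerAngle, ← arccos_cos (x := 2 * arctan (inradius R / R i)) (by linarith) (by linarith),
    cos_two_mul, cos_sq_arctan, div_pow, inradius_sq hR i]
  congr 1
  field_simp
  ring

lemma arctan_div_inradius (hR : ∀ i, 0 < R i) (i : Fin 3) :
    arctan (R i / inradius R) = (π - cornerAngle R i) / 2 := by
  rw [cornerAngle_eq_two_mul_arctan hR, ← inv_div,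
    arctan_inv_of_pos (div_pos (inradius_pos hR) (hR i))]
  ring

lemma sum_cornerAngle (hR : ∀ i, 0 < R i) : ∑ i, cornerAngle R i = π := by
  have h₀ := hR 0
  have h₁ := hR 1
  have h₂ := hR 2
  have hr := inradius_pos hR
  have hsq : inradius R ^ 2 = R 0 * R 1 * R 2 / (R 0 + R 1 + R 2) := inradius_sq hR 0
  have tangents : inradius R / R 0 * (inradius R / R 1) + inradius R / R 1 * (inradius R / R 2) +
      inradius R / R 2 * (inradius R / R 0) = 1 := by
    rw [eq_div_iff (by positivity)] at hsq
    field_simp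
    linarith
  have half_sum := arctan_add_arctan_add_arctan_eq_pi_div_two
    (div_pos hr h₀) (div_pos hr h₁) (div_pos hr h₂) tangents
  simp only [Fin.sum_univ_three, cornerAngle_eq_two_mul_arctan hR]
  linarith

lemma sum_angleExcess (hR : ∀ i, 0 < R i) : ∑ i, angleExcess R i = 0 := by
  simp only [angleExcess, Finset.sum_sub_distrib, sum_cornerAngle hR, Finset.sum_const,
    Finset.card_univ, Fintype.card_fin, nsmul_eq_mul]
  ring

lemma eq_sqrt_three_mul_inradius (hR : ∀ i, 0 < R i) {i : Fin 3}
    (h : angleExcess R i = 0) : R i = √3 * inradius R := by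
  have harctan : arctan (R i / inradius R) = arctan (√3) := by
    rw [arctan_div_inradius hR, arctan_sqrt_three]
    linarith [sub_eq_zero.1 h]
  exact (div_eq_iff (inradius_pos hR).ne').1 (arctan_injective harctan)

/-- The radius `R i = r cot (α i / 2)` is a strongly decreasing function of the angle `α i`. -/
lemma mul_angleExcess_le (hR : ∀ i, 0 < R i) (i : Fin 3) :
    R i * angleExcess R i ≤
      inradius R * (√3 * angleExcess R i - angleExcess R i ^ 2 / 2) := by
  have hr := inradius_pos hR
  have hmono := sq_arctan_sub_arctan_le (R i / inradius R) √3
  have harctan : arctan (R i / inradius R) - arctan √3 = -angleExcess R i / 2 := by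
    rw [arctan_div_inradius hR, arctan_sqrt_three, angleExcess]
    ring
  rw [harctan] at hmono
  have hR_eq : R i = inradius R * (R i / inradius R) := by field_simp
  set t := R i / inradius R
  rw [hR_eq, mul_assoc]
  gcongr
  linarith

/-- Young's inequality after writing `q² - p² = 2 q (q - p) - (q - p)²`. -/
lemma sqrt_three_mul_sq_sub_sq_mul_le (p q : ℝ) {d : ℝ} (hd : -2 ≤ d) :
    √3 * ((q ^ 2 - p ^ 2) * d) ≤ q ^ 2 * d ^ 2 / 4 + 16 * (q - p) ^ 2 := by
  have hsq : √3 ^ 2 = 3 := sq_sqrt (by norm_num)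
  have hle : √3 ≤ 2 := by rw [sqrt_le_left (by norm_num)]; norm_num
  have young : 2 * √3 * (q - p) * (q * d) ≤ q ^ 2 * d ^ 2 / 4 + 12 * (q - p) ^ 2 := by
    nlinarith [sq_nonneg (q * d / 2 - 2 * √3 * (q - p))]
  have remainder : -(√3 * d) * (q - p) ^ 2 ≤ 4 * (q - p) ^ 2 := by
    gcongr
    nlinarith [sqrt_nonneg 3]
  calc √3 * ((q ^ 2 - p ^ 2) * d)
      = 2 * √3 * (q - p) * (q * d) + -(√3 * d) * (q - p) ^ 2 := by ring
    _ ≤ q ^ 2 * d ^ 2 / 4 + 16 * (q - p) ^ 2 := by linarith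

lemma neg_two_le_angleExcess (R : Fin 3 → ℝ) (i : Fin 3) : -2 ≤ angleExcess R i := by
  have hnonneg : 0 ≤ cornerAngle R i := arccos_nonneg _
  rw [angleExcess]
  linarith [pi_lt_four]

/-- Since the angle excesses sum to zero, a constant may be subtracted from the weights `w i ^ 2`
before estimating. -/
lemma sqrt_three_mul_sum_sq_mul_angleExcess_le (hR : ∀ i, 0 < R i) (w : Fin 3 → ℝ) :
    √3 * ∑ i, w i ^ 2 * angleExcess R i ≤
      ∑ i, (w i ^ 2 * angleExcess R i ^ 2 / 4 + 16 * (w i - w 0) ^ 2) := by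
  calc √3 * ∑ i, w i ^ 2 * angleExcess R i
      = √3 * (∑ i, w i ^ 2 * angleExcess R i -
          w 0 ^ 2 * ∑ i, angleExcess R i) := by rw [sum_angleExcess hR]; ring
    _ = ∑ i, √3 * ((w i ^ 2 - w 0 ^ 2) * angleExcess R i) := by
        simp only [Finset.mul_sum, ← Finset.sum_sub_distrib, sub_mul]
    _ ≤ ∑ i, (w i ^ 2 * angleExcess R i ^ 2 / 4 + 16 * (w i - w 0) ^ 2) :=
        Finset.sum_le_sum fun i _ ↦
          sqrt_three_mul_sq_sub_sq_mul_le _ _ (neg_two_le_angleExcess R i)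

lemma sum_sq_mul_angleExcess_add_dissipation_le {M : ℝ} (hR : ∀ i, 0 < R i)
    (hM : ∀ i, R i ≤ M) (w : Fin 3 → ℝ) :
    ∑ i, w i ^ 2 * R i * angleExcess R i + dissipation R w ≤ 16 * M * ∑ i, (w i - w 0) ^ 2 := by
  rw [dissipation]
  set r := inradius R
  have strong_decrease : ∑ i, w i ^ 2 * R i * angleExcess R i ≤
      r * (√3 * ∑ i, w i ^ 2 * angleExcess R i) - r / 2 * ∑ i, w i ^ 2 * angleExcess R i ^ 2 := by
    simp only [Finset.mul_sum, ← Finset.sum_sub_distrib]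
    refine Finset.sum_le_sum fun i _ ↦ ?_
    linarith [mul_le_mul_of_nonneg_left (mul_angleExcess_le hR i) (sq_nonneg (w i))]
  have weight_variation : r * (√3 * ∑ i, w i ^ 2 * angleExcess R i) ≤
      r / 4 * ∑ i, w i ^ 2 * angleExcess R i ^ 2 + r * (16 * ∑ i, (w i - w 0) ^ 2) := by
    refine (mul_le_mul_of_nonneg_left (sqrt_three_mul_sum_sq_mul_angleExcess_le hR w)
      (inradius_nonneg R)).trans_eq ?_
    rw [Finset.sum_add_distrib, ← Finset.sum_div, ← Finset.mul_sum]
    ring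
  have inradius_bound : r * (16 * ∑ i, (w i - w 0) ^ 2) ≤ M * (16 * ∑ i, (w i - w 0) ^ 2) := by
    gcongr
    exact inradius_le hR hM
  linarith

lemma dissipation_nonneg (R w : Fin 3 → ℝ) : 0 ≤ dissipation R w := by
  have hr := inradius_nonneg R
  unfold dissipation
  positivity

lemma inradius_mul_sq_angleExcess_le_dissipation (R : Fin 3 → ℝ) {w : Fin 3 → ℝ} {i : Fin 3}
    (hw : w i = 1) : inradius R / 4 * angleExcess R i ^ 2 ≤ dissipation R w := by
  have hr := inradius_nonneg R
  unfold dissipation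
  gcongr
  calc angleExcess R i ^ 2 = w i ^ 2 * angleExcess R i ^ 2 := by rw [hw]; ring
    _ ≤ ∑ k, w k ^ 2 * angleExcess R k ^ 2 :=
      Finset.single_le_sum (f := fun k ↦ w k ^ 2 * angleExcess R k ^ 2)
        (fun k _ ↦ by positivity) (Finset.mem_univ i)

end Triangle

section ParabolicGroups

open scoped Topology

variable {G : Type*} [AddCommGroup G]

/-- The Dirichlet energy of `φ` in the direction `x`. -/
noncomputable def directionalEnergy (φ : G → ℝ) (x : G) : ℝ :=
  ∑' v, (φ (v + x) - φ v) ^ 2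

/-- Parabolicity (recurrence) of the Cayley graphs of `G`, in the form that a point has zero
capacity: there are finitely supported functions with value `1` at the origin and arbitrarily small
Dirichlet energy in any finite set of directions. -/
def IsParabolicAddGroup (G : Type*) [AddCommGroup G] : Prop :=
  ∀ (T : Finset G), ∀ ε > 0, ∃ φ : G → ℝ,
    φ.HasFiniteSupport ∧ φ 0 = 1 ∧ ∀ x ∈ T, directionalEnergy φ x ≤ ε

lemma directionalEnergy_comp_sub (φ : G → ℝ) (x c : G) :
    directionalEnergy (fun v ↦ φ (v - c)) x = directionalEnergy φ x := by
  unfold directionalEnergy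
  rw [← (Equiv.subRight c).tsum_eq fun v ↦ (φ (v + x) - φ v) ^ 2]
  simp only [Equiv.subRight_apply, sub_add_eq_add_sub]

lemma IsParabolicAddGroup.exists_eq_one (hG : IsParabolicAddGroup G) (T : Finset G) (c : G)
    {ε : ℝ} (hε : 0 < ε) :
    ∃ φ : G → ℝ, φ.HasFiniteSupport ∧ φ c = 1 ∧ ∀ x ∈ T, directionalEnergy φ x ≤ ε := by
  obtain ⟨φ, hφ, hφ₀, hφT⟩ := hG T ε hε
  refine ⟨fun v ↦ φ (v - c), hφ.fun_comp_of_injective (sub_left_injective (b := c)),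
    by simp [hφ₀], fun x hx ↦ ?_⟩
  rw [directionalEnergy_comp_sub]
  exact hφT x hx

lemma tsum_sub_sq_eq_directionalEnergy (φ : G → ℝ) (a b : G) :
    ∑' v, (φ (v + a) - φ (v + b)) ^ 2 = directionalEnergy φ (a - b) := by
  rw [directionalEnergy, ← (Equiv.addRight b).tsum_eq fun v ↦ (φ (v + (a - b)) - φ v) ^ 2]
  simp only [Equiv.coe_addRight, add_assoc, add_sub_cancel]

lemma tsum_sum_mul_translate {ι : Type*} [Fintype ι] {ψ : G → ℝ} (hψ : ψ.HasFiniteSupport)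
    (s : ι → G) (f : G → ι → ℝ) :
    ∑' v, ∑ i, ψ (v + s i) * f v i = ∑' v, ψ v * ∑ i, f (v - s i) i := by
  have translate (i : ι) : (fun v ↦ ψ (v + s i)).HasFiniteSupport :=
    hψ.fun_comp_of_injective (add_left_injective (s i))
  simp only [Finset.mul_sum]
  rw [Summable.tsum_finsetSum fun i _ ↦ summable_of_hasFiniteSupport ((translate i).fun_mul_left _),
    Summable.tsum_finsetSum fun i _ ↦ summable_of_hasFiniteSupport (hψ.fun_mul_left _)]
  refine Finset.sum_congr rfl fun i _ ↦ ?_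
  rw [← (Equiv.addRight (s i)).tsum_eq fun v ↦ ψ v * f (v - s i) i]
  simp only [Equiv.coe_addRight, add_sub_cancel_right]

/-- The values of `R` at the vertices `v + s 0`, `v + s 1`, `v + s 2` of the translate by `v` of the
triangle `s`. -/
def onTriangle (R : G → ℝ) (s : Fin 3 → G) (v : G) : Fin 3 → ℝ :=
  fun i ↦ R (v + s i)

/-- The total angle excess at the vertex `v` of the three translates of the triangle `s` that have
`v` as a vertex. -/
noncomputable def vertexExcess (R : G → ℝ) (s : Fin 3 → G) (v : G) : ℝ :=
  ∑ i, angleExcess (onTriangle R s (v - s i)) i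

variable {R φ : G → ℝ} {M : ℝ}

lemma angleExcess_onTriangle_sub (R : G → ℝ) (s : Fin 3 → G) (v : G) (i : Fin 3) :
    angleExcess (onTriangle R s (v - s i)) i =
      arccos (1 - 2 * R (v + (s (i + 1) - s i)) * R (v + (s (i + 2) - s i)) /
        ((R v + R (v + (s (i + 1) - s i))) * (R v + R (v + (s (i + 2) - s i))))) - π / 3 := by
  simp only [angleExcess, cornerAngle, onTriangle, sub_add_cancel, sub_add_eq_add_sub,
    add_sub_assoc]

lemma hasFiniteSupport_onTriangle (hφ : φ.HasFiniteSupport) (s : Fin 3 → G) (i : Fin 3) :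
    (fun v ↦ onTriangle φ s v i).HasFiniteSupport :=
  hφ.fun_comp_of_injective (add_left_injective (s i))

lemma hasFiniteSupport_dissipation_onTriangle (hφ : φ.HasFiniteSupport) (s : Fin 3 → G) :
    (fun v ↦ dissipation (onTriangle R s v) (onTriangle φ s v)).HasFiniteSupport := by
  have := hasFiniteSupport_onTriangle hφ s
  unfold dissipation
  fun_prop (disch := simp)

/-- Summation by parts distributes `φ ^ 2 * R` over triangles instead of vertices, where the
energy inequality for a single triangle applies. -/
lemma tsum_vertexExcess_add_tsum_dissipation_le (hR : ∀ v, 0 < R v) (hM : ∀ v, R v ≤ M)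
    (hφ : φ.HasFiniteSupport) (s : Fin 3 → G) :
    ∑' v, φ v ^ 2 * R v * vertexExcess R s v +
        ∑' v, dissipation (onTriangle R s v) (onTriangle φ s v) ≤
      16 * M * ∑ i, directionalEnergy φ (s i - s 0) := by
  have finite_support := hasFiniteSupport_onTriangle hφ s
  have summable_excess : Summable fun v ↦
      ∑ i, onTriangle φ s v i ^ 2 * onTriangle R s v i * angleExcess (onTriangle R s v) i :=
    summable_of_hasFiniteSupport (by fun_prop (disch := simp))
  have summable_dissipation : Summable fun v ↦
      dissipation (onTriangle R s v) (onTriangle φ s v) :=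
    summable_of_hasFiniteSupport (hasFiniteSupport_dissipation_onTriangle hφ s)
  have summable_gradient (i : Fin 3) : Summable fun v ↦
      (onTriangle φ s v i - onTriangle φ s v 0) ^ 2 :=
    summable_of_hasFiniteSupport (by fun_prop (disch := simp))
  calc ∑' v, φ v ^ 2 * R v * vertexExcess R s v +
        ∑' v, dissipation (onTriangle R s v) (onTriangle φ s v)
      = ∑' v, (∑ i, onTriangle φ s v i ^ 2 * onTriangle R s v i * angleExcess (onTriangle R s v) i +
          dissipation (onTriangle R s v) (onTriangle φ s v)) := by
        rw [summable_excess.tsum_add summable_dissipation]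
        congr 1
        exact (tsum_sum_mul_translate (ψ := fun v ↦ φ v ^ 2 * R v) (by fun_prop (disch := simp)) s
          fun v ↦ angleExcess (onTriangle R s v)).symm
    _ ≤ ∑' v, 16 * M * ∑ i, (onTriangle φ s v i - onTriangle φ s v 0) ^ 2 :=
        (summable_excess.add summable_dissipation).tsum_le_tsum
          (fun v ↦ sum_sq_mul_angleExcess_add_dissipation_le (fun i ↦ hR _) (fun i ↦ hM _) _)
          ((summable_sum fun i _ ↦ summable_gradient i).mul_left _)
    _ = 16 * M * ∑ i, directionalEnergy φ (s i - s 0) := by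
        rw [tsum_mul_left, Summable.tsum_finsetSum fun i _ ↦ summable_gradient i]
        simp only [onTriangle, tsum_sub_sq_eq_directionalEnergy]

variable {ι : Type*} [Fintype ι] {s : ι → Fin 3 → G}

lemma sum_tsum_dissipation_le (hR : ∀ v, 0 < R v) (hM : ∀ v, R v ≤ M)
    (hexcess : ∀ v, 0 ≤ ∑ j, vertexExcess R (s j) v) (hφ : φ.HasFiniteSupport) :
    ∑ j, ∑' v, dissipation (onTriangle R (s j) v) (onTriangle φ (s j) v) ≤
      16 * M * ∑ j, ∑ i, directionalEnergy φ (s j i - s j 0) := by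
  have total_excess_nonneg : 0 ≤ ∑ j, ∑' v, φ v ^ 2 * R v * vertexExcess R (s j) v := by
    rw [← Summable.tsum_finsetSum fun j _ ↦
      summable_of_hasFiniteSupport (by fun_prop (disch := simp))]
    refine tsum_nonneg fun v ↦ ?_
    rw [← Finset.mul_sum]
    exact mul_nonneg (mul_nonneg (sq_nonneg _) (hR v).le) (hexcess v)
  have energy_inequality := Finset.sum_le_sum fun j (_ : j ∈ Finset.univ) ↦
    tsum_vertexExcess_add_tsum_dissipation_le hR hM hφ (s j)
  rw [Finset.sum_add_distrib, ← Finset.mul_sum] at energy_inequality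
  linarith

lemma dissipation_le_sum_tsum_dissipation (hφ : φ.HasFiniteSupport) (j : ι) (v : G) :
    dissipation (onTriangle R (s j) v) (onTriangle φ (s j) v) ≤
      ∑ j, ∑' v, dissipation (onTriangle R (s j) v) (onTriangle φ (s j) v) :=
  calc dissipation (onTriangle R (s j) v) (onTriangle φ (s j) v)
      ≤ ∑' u, dissipation (onTriangle R (s j) u) (onTriangle φ (s j) u) :=
        (summable_of_hasFiniteSupport (hasFiniteSupport_dissipation_onTriangle hφ (s j))).le_tsum v
          fun _ _ ↦ dissipation_nonneg _ _
    _ ≤ ∑ j, ∑' v, dissipation (onTriangle R (s j) v) (onTriangle φ (s j) v) :=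
        Finset.single_le_sum
          (f := fun j ↦ ∑' v, dissipation (onTriangle R (s j) v) (onTriangle φ (s j) v))
          (fun _ _ ↦ tsum_nonneg fun _ ↦ dissipation_nonneg _ _) (Finset.mem_univ j)

theorem IsParabolicAddGroup.angleExcess_eq_zero (hG : IsParabolicAddGroup G)
    (hR : ∀ v, 0 < R v) (hM : ∀ v, R v ≤ M) (hexcess : ∀ v, 0 ≤ ∑ j, vertexExcess R (s j) v)
    (j : ι) (v : G) (i : Fin 3) : angleExcess (onTriangle R (s j) v) i = 0 := by
  classical
  have hM₀ : 0 < M := (hR 0).trans_le (hM 0)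
  set r := inradius (onTriangle R (s j) v)
  have hr : 0 < r := inradius_pos fun i ↦ hR _
  set C : ℝ := 16 * M * ∑ _j : ι, ∑ _i : Fin 3, 1
  have arbitrarily_small (ε : ℝ) (hε : 0 < ε) :
      r / 4 * angleExcess (onTriangle R (s j) v) i ^ 2 ≤ C * ε := by
    obtain ⟨φ, hφ, hφ_one, hφ_energy⟩ := hG.exists_eq_one
      (Finset.univ.image fun p : ι × Fin 3 ↦ s p.1 p.2 - s p.1 0) (v + s j i) hε
    calc r / 4 * angleExcess (onTriangle R (s j) v) i ^ 2
        ≤ dissipation (onTriangle R (s j) v) (onTriangle φ (s j) v) :=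
          inradius_mul_sq_angleExcess_le_dissipation _ hφ_one
      _ ≤ _ := dissipation_le_sum_tsum_dissipation hφ j v
      _ ≤ 16 * M * ∑ j, ∑ i, directionalEnergy φ (s j i - s j 0) :=
          sum_tsum_dissipation_le hR hM hexcess hφ
      _ ≤ 16 * M * ∑ _j : ι, ∑ _i : Fin 3, ε := by
          gcongr with k _ l _
          exact hφ_energy _ (Finset.mem_image_of_mem _ (Finset.mem_univ (k, l)))
      _ = C * ε := by simp only [C, mul_assoc, Finset.sum_mul, one_mul]
  have nonpos : r / 4 * angleExcess (onTriangle R (s j) v) i ^ 2 ≤ 0 := by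
    have tendsto_zero : Filter.Tendsto (fun ε ↦ C * ε) (𝓝[>] 0) (𝓝 0) :=
      ((continuous_const_mul C).tendsto' 0 0 (mul_zero C)).mono_left nhdsWithin_le_nhds
    exact ge_of_tendsto tendsto_zero (eventually_mem_nhdsWithin.mono arbitrarily_small)
  have sq_nonpos : angleExcess (onTriangle R (s j) v) i ^ 2 ≤ 0 :=
    nonpos_of_mul_nonpos_right nonpos (by positivity)
  exact pow_eq_zero_iff two_ne_zero |>.1 (sq_nonpos.antisymm (sq_nonneg _))

theorem IsParabolicAddGroup.eq_of_nonneg_vertexExcess (hG : IsParabolicAddGroup G)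
    (hR : ∀ v, 0 < R v) (hM : ∀ v, R v ≤ M) (hexcess : ∀ v, 0 ≤ ∑ j, vertexExcess R (s j) v)
    (j : ι) (v : G) (i k : Fin 3) : R (v + s j i) = R (v + s j k) := by
  have radius_eq (l : Fin 3) : R (v + s j l) = √3 * inradius (onTriangle R (s j) v) :=
    eq_sqrt_three_mul_inradius (fun i ↦ hR _) (hG.angleExcess_eq_zero hR hM hexcess j v l)
  rw [radius_eq, radius_eq]

end ParabolicGroups

section LogarithmicCutoff

open Filter
open scoped Topology

variable {E : Type*} [SeminormedAddCommGroup E]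

/-- The logarithmic cutoff function of radius `N`. It decreases from `1` at the origin to `0` at
distance `N`, its gradient being inversely proportional to the distance from the origin. -/
noncomputable def logCutoff (N : ℕ) (v : E) : ℝ :=
  max (1 - log (1 + ‖v‖) / log (1 + N)) 0

lemma logCutoff_zero (N : ℕ) : logCutoff N (0 : E) = 1 := by
  simp [logCutoff]

lemma logCutoff_eq_zero {N : ℕ} (hN : N ≠ 0) {v : E} (hv : N ≤ ‖v‖) : logCutoff N v = 0 := by
  have hlog : 0 < log (1 + N) := log_pos (by simpa using Nat.pos_of_ne_zero hN)
  refine max_eq_right (sub_nonpos.2 ((one_le_div hlog).2 ?_))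
  gcongr

lemma log_sub_log_le_div {a b : ℝ} (ha : 0 < a) (hb : 0 < b) : log b - log a ≤ (b - a) / a := by
  rw [← log_div hb.ne' ha.ne', sub_div, div_self ha.ne']
  exact log_le_sub_one_of_pos (div_pos hb ha)

lemma abs_log_one_add_norm_sub_le (v x : E) :
    |log (1 + ‖v + x‖) - log (1 + ‖v‖)| ≤ ‖x‖ * (1 + ‖x‖) / (1 + ‖v‖) := by
  have hle : ‖v + x‖ ≤ ‖v‖ + ‖x‖ := norm_add_le v x
  have hge : ‖v‖ ≤ ‖v + x‖ + ‖x‖ := norm_le_add_norm_add v x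
  rw [abs_sub_le_iff]
  constructor
  · calc log (1 + ‖v + x‖) - log (1 + ‖v‖) ≤ (1 + ‖v + x‖ - (1 + ‖v‖)) / (1 + ‖v‖) :=
          log_sub_log_le_div (by positivity) (by positivity)
      _ ≤ ‖x‖ * (1 + ‖x‖) / (1 + ‖v‖) := by
          gcongr
          nlinarith [norm_nonneg x]
  · calc log (1 + ‖v‖) - log (1 + ‖v + x‖) ≤ (1 + ‖v‖ - (1 + ‖v + x‖)) / (1 + ‖v + x‖) :=
          log_sub_log_le_div (by positivity) (by positivity)
      _ ≤ ‖x‖ / (1 + ‖v + x‖) := by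
          gcongr
          linarith
      _ ≤ ‖x‖ * (1 + ‖x‖) / (1 + ‖v‖) := by
          rw [div_le_div_iff₀ (by positivity) (by positivity), mul_assoc]
          gcongr
          nlinarith [norm_nonneg x, norm_nonneg (v + x)]

lemma sq_logCutoff_add_sub_le (N : ℕ) (v x : E) :
    (logCutoff N (v + x) - logCutoff N v) ^ 2 ≤
      (‖x‖ * (1 + ‖x‖)) ^ 2 / log (1 + N) ^ 2 * ((1 + ‖v‖) ^ 2)⁻¹ := by
  have hlog : 0 ≤ log (1 + N) := log_nonneg (by simp)
  have abs_le : |logCutoff N (v + x) - logCutoff N v| ≤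
      ‖x‖ * (1 + ‖x‖) / (1 + ‖v‖) / log (1 + N) := by
    calc |logCutoff N (v + x) - logCutoff N v|
        ≤ |1 - log (1 + ‖v + x‖) / log (1 + N) - (1 - log (1 + ‖v‖) / log (1 + N))| :=
          abs_max_sub_max_le_abs _ _ _
      _ = |log (1 + ‖v + x‖) - log (1 + ‖v‖)| / log (1 + N) := by
          rw [sub_sub_sub_cancel_left, ← sub_div, abs_div, abs_of_nonneg hlog, abs_sub_comm]
      _ ≤ ‖x‖ * (1 + ‖x‖) / (1 + ‖v‖) / log (1 + N) := by
          gcongr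
          exact abs_log_one_add_norm_sub_le v x
  calc (logCutoff N (v + x) - logCutoff N v) ^ 2
      ≤ (‖x‖ * (1 + ‖x‖) / (1 + ‖v‖) / log (1 + N)) ^ 2 := sq_le_sq' (neg_le_of_abs_le abs_le)
        (le_of_abs_le abs_le)
    _ = (‖x‖ * (1 + ‖x‖)) ^ 2 / log (1 + N) ^ 2 * ((1 + ‖v‖) ^ 2)⁻¹ := by
        rw [div_pow, div_pow, div_right_comm, ← div_eq_mul_inv]

lemma mem_box_iff_norm_eq {v : ℤ × ℤ} {m : ℕ} : v ∈ Finset.box m ↔ ‖v‖ = m := by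
  rw [Int.mem_box, Prod.norm_def, Int.norm_eq_abs, Int.norm_eq_abs, ← Int.cast_abs,
    ← Int.cast_abs, ← Nat.cast_natAbs, ← Nat.cast_natAbs]
  norm_cast

lemma mem_biUnion_box_iff_norm_lt {v : ℤ × ℤ} {n : ℕ} :
    v ∈ (Finset.range n).biUnion Finset.box ↔ ‖v‖ < n := by
  obtain ⟨m, hm, -⟩ := Int.existsUnique_mem_box v
  simp only [Finset.mem_biUnion, Finset.mem_range, mem_box_iff_norm_eq] at hm ⊢
  rw [hm]
  simp

lemma card_box_le (m : ℕ) : ((Finset.box m : Finset (ℤ × ℤ)).card : ℝ) ≤ 8 * (1 + m) := by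
  rcases eq_or_ne m 0 with rfl | hm
  · simp
  · rw [Int.card_box hm]
    push_cast
    linarith

lemma sum_inv_sq_one_add_norm_le (n : ℕ) :
    ∑ v ∈ (Finset.range n).biUnion Finset.box, ((1 + ‖(v : ℤ × ℤ)‖) ^ 2)⁻¹ ≤ 8 * (1 + log n) := by
  have box_disjoint : ((Finset.range n : Set ℕ)).PairwiseDisjoint
      (Finset.box : ℕ → Finset (ℤ × ℤ)) := fun a _ b _ hab ↦
    Finset.disjoint_left.2 fun v ha hb ↦ hab <| by
      rw [mem_box_iff_norm_eq] at ha hb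
      exact_mod_cast ha.symm.trans hb
  calc ∑ v ∈ (Finset.range n).biUnion Finset.box, ((1 + ‖(v : ℤ × ℤ)‖) ^ 2)⁻¹
      = ∑ m ∈ Finset.range n,
          ((Finset.box m : Finset (ℤ × ℤ)).card : ℝ) * ((1 + (m : ℝ)) ^ 2)⁻¹ := by
        rw [Finset.sum_biUnion box_disjoint]
        refine Finset.sum_congr rfl fun m _ ↦ ?_
        rw [← nsmul_eq_mul]
        exact Finset.sum_eq_card_nsmul fun v hv ↦ by rw [mem_box_iff_norm_eq.1 hv]
    _ ≤ ∑ m ∈ Finset.range n, 8 * (1 + (m : ℝ)) * ((1 + (m : ℝ)) ^ 2)⁻¹ := by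
        gcongr with m
        exact card_box_le m
    _ = 8 * (harmonic n : ℝ) := by
        rw [harmonic, Rat.cast_sum, Finset.mul_sum]
        refine Finset.sum_congr rfl fun m _ ↦ ?_
        push_cast
        field_simp
        ring
    _ ≤ 8 * (1 + log n) := by
        gcongr
        exact harmonic_le_one_add_log n

lemma hasFiniteSupport_logCutoff {N : ℕ} (hN : N ≠ 0) :
    (logCutoff N : ℤ × ℤ → ℝ).HasFiniteSupport :=
  ((Finset.range N).biUnion Finset.box).finite_toSet.subset fun _ hv ↦
    mem_biUnion_box_iff_norm_lt.2 <| not_le.1 fun hle ↦ hv (logCutoff_eq_zero hN hle)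

lemma directionalEnergy_logCutoff_le {N : ℕ} (hN : N ≠ 0) {x : ℤ × ℤ} {k : ℕ} (hx : ‖x‖ = k) :
    directionalEnergy (logCutoff N) x ≤
      8 * (k * (1 + k)) ^ 2 * (1 + log (N + k)) / log (1 + N) ^ 2 := by
  have vanishes (v : ℤ × ℤ) (hv : v ∉ (Finset.range (N + k)).biUnion Finset.box) :
      (logCutoff N (v + x) - logCutoff N v) ^ 2 = 0 := by
    rw [mem_biUnion_box_iff_norm_lt, not_lt, Nat.cast_add] at hv
    have hv' : N ≤ ‖v + x‖ := by linarith [norm_le_add_norm_add v x]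
    rw [logCutoff_eq_zero hN hv', logCutoff_eq_zero hN (by linarith [norm_nonneg x]), sub_zero,
      zero_pow two_ne_zero]
  calc directionalEnergy (logCutoff N) x
      = ∑ v ∈ (Finset.range (N + k)).biUnion Finset.box,
          (logCutoff N (v + x) - logCutoff N v) ^ 2 := tsum_eq_sum vanishes
    _ ≤ ∑ v ∈ (Finset.range (N + k)).biUnion Finset.box,
          (k * (1 + k)) ^ 2 / log (1 + N) ^ 2 * ((1 + ‖v‖) ^ 2)⁻¹ :=
        Finset.sum_le_sum fun v _ ↦ hx ▸ sq_logCutoff_add_sub_le N v x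
    _ ≤ (k * (1 + k)) ^ 2 / log (1 + N) ^ 2 * (8 * (1 + log ((N + k : ℕ) : ℝ))) := by
        rw [← Finset.mul_sum]
        gcongr
        exact sum_inv_sq_one_add_norm_le (N + k)
    _ = 8 * (k * (1 + k)) ^ 2 * (1 + log (N + k)) / log (1 + N) ^ 2 := by
        push_cast
        ring

lemma tendsto_directionalEnergy_logCutoff (x : ℤ × ℤ) :
    Tendsto (fun N ↦ directionalEnergy (logCutoff N) x) atTop (𝓝 0) := by
  obtain ⟨k, hk, -⟩ := Int.existsUnique_mem_box x
  rw [mem_box_iff_norm_eq] at hk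
  have tendsto_log : Tendsto (fun N : ℕ ↦ log (1 + N)) atTop atTop :=
    tendsto_log_atTop.comp (tendsto_atTop_add_const_left _ 1 tendsto_natCast_atTop_atTop)
  have upper : ∀ᶠ N : ℕ in atTop, directionalEnergy (logCutoff N) x ≤
      8 * (k * (1 + k)) ^ 2 * (2 + k) / log (1 + N) := by
    filter_upwards [eventually_ne_atTop 0, tendsto_log.eventually_ge_atTop 1] with N hN hlog
    have log_le : log (N + k) ≤ k + log (1 + N) := by
      rw [← sub_le_iff_le_add]
      refine (log_sub_log_le_div (by positivity) (by positivity)).trans ?_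
      rw [div_le_iff₀ (by positivity)]
      nlinarith [mul_nonneg k.cast_nonneg (α := ℝ) N.cast_nonneg]
    calc directionalEnergy (logCutoff N) x
        ≤ 8 * (k * (1 + k)) ^ 2 * (1 + log (N + k)) / log (1 + N) ^ 2 :=
          directionalEnergy_logCutoff_le hN hk
      _ ≤ 8 * (k * (1 + k)) ^ 2 * ((2 + k) * log (1 + N)) / log (1 + N) ^ 2 := by
          gcongr
          nlinarith [mul_nonneg k.cast_nonneg (sub_nonneg.2 hlog)]
      _ = 8 * (k * (1 + k)) ^ 2 * (2 + k) / log (1 + N) := by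
          field_simp
  exact squeeze_zero' (.of_forall fun N ↦ tsum_nonneg fun v ↦ sq_nonneg _) upper
    (tendsto_log.const_div_atTop _)

theorem isParabolicAddGroup_int_prod_int : IsParabolicAddGroup (ℤ × ℤ) := by
  intro T ε hε
  have small_energy : ∀ᶠ N in atTop, ∀ x ∈ T, directionalEnergy (logCutoff N) x ≤ ε :=
    T.eventually_all.2 fun x _ ↦
      (tendsto_directionalEnergy_logCutoff x).eventually_le_const hε
  obtain ⟨N, hN, hN₀⟩ := (small_energy.and (eventually_ne_atTop 0)).exists
  exact ⟨logCutoff N, hasFiniteSupport_logCutoff hN₀, logCutoff_zero N, hN⟩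

end LogarithmicCutoff

section HexagonalLattice

lemma hexω_sq : hexω ^ 2 = hexω - 1 := by
  have hexω_eq : hexω = 1 / 2 + (√3 / 2 : ℝ) * Complex.I := by
    rw [hexω, Complex.exp_mul_I, ← Complex.ofReal_ofNat, ← Complex.ofReal_div,
      ← Complex.ofReal_cos, ← Complex.ofReal_sin, cos_pi_div_three, sin_pi_div_three]
    push_cast
    ring
  have sqrt_three_sq : ((√3 : ℝ) : ℂ) ^ 2 = 3 := by
    norm_cast
    exact sq_sqrt (by norm_num)
  rw [hexω_eq]
  push_cast
  linear_combination (((√3 : ℝ) : ℂ) ^ 2 / 4) * Complex.I_sq - 1 / 4 * sqrt_three_sq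

/-- The point of the triangular lattice with coordinates `v` in the basis `1, ω`. -/
noncomputable def latticePoint (v : ℤ × ℤ) : ℂ :=
  v.1 + v.2 * hexω

lemma latticePoint_mem_hexLattice (v : ℤ × ℤ) : latticePoint v ∈ hexLattice :=
  ⟨v.1, v.2, rfl⟩

lemma latticePoint_add (v w : ℤ × ℤ) :
    latticePoint (v + w) = latticePoint v + latticePoint w := by
  simp only [latticePoint, Prod.fst_add, Prod.snd_add]
  push_cast
  ring

/-- Multiplication by `ω` in the coordinates of `latticePoint`. -/
def hexRotation (v : ℤ × ℤ) : ℤ × ℤ :=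
  (-v.2, v.1 + v.2)

lemma latticePoint_hexRotation (v : ℤ × ℤ) :
    latticePoint (hexRotation v) = hexω * latticePoint v := by
  simp only [latticePoint, hexRotation]
  push_cast
  linear_combination -(v.2 : ℂ) * hexω_sq

lemma latticePoint_iterate_hexRotation (k : ℕ) :
    latticePoint (hexRotation^[k] (1, 0)) = hexω ^ k := by
  induction k with
  | zero => simp [latticePoint]
  | succ k ih => rw [Function.iterate_succ_apply', latticePoint_hexRotation, ih, pow_succ']

/-- The triangles with vertices `0, 1, ω` and `0, ω, ω²` in the coordinates of `latticePoint`.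
Their translates are the faces of the triangular lattice. -/
def hexTriangle : Fin 2 → Fin 3 → ℤ × ℤ :=
  ![![0, (1, 0), (0, 1)], ![0, (0, 1), (-1, 1)]]

lemma sum_vertexExcess_hexTriangle (ρ : ℂ → ℝ) (v : ℤ × ℤ) :
    ∑ j, vertexExcess (ρ ∘ latticePoint) (hexTriangle j) v =
      hexAngleSum ρ (latticePoint v) - 2 * π := by
  simp only [hexAngleSum, ← latticePoint_iterate_hexRotation, ← latticePoint_add, vertexExcess,
    angleExcess_onTriangle_sub, Fin.sum_univ_two, Fin.sum_univ_three, Finset.sum_range_succ]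
  simp only [hexTriangle, hexRotation, Function.comp_apply, Function.iterate_succ,
    Function.iterate_zero, id_eq, Matrix.cons_val, Matrix.cons_val',
    Matrix.cons_val_zero, Matrix.cons_val_one, Matrix.cons_val_fin_one, Fin.isValue, Fin.reduceAdd,
    Nat.reduceAdd, Int.reduceNeg, Finset.range_zero, Finset.sum_empty, Prod.mk_sub_mk, Prod.neg_mk,
    zero_add, add_zero, sub_zero, zero_sub, sub_self, neg_zero, neg_neg, sub_neg_eq_add,
    neg_add_cancel, add_neg_cancel]
  ring

lemma apply_eq_apply_zero_of_periodic {α : Type*} {f : ℤ × ℤ → α} (h₁ : f.Periodic (1, 0))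
    (h₂ : f.Periodic (0, 1)) (v : ℤ × ℤ) : f v = f 0 := by
  have hv : v = 0 + v.1 • (1, 0) + v.2 • (0, 1) := by ext <;> simp
  rw [hv, h₂.zsmul, h₁.zsmul]

end HexagonalLattice

/-- Discrete Liouville theorem for the hexagonal complex: a positive label on
the triangular lattice whose angle sum is at least `2π` at every vertex and
which is bounded above must be constant. -/
theorem hex_liouville
    (ρ : ℂ → ℝ)
    (hρ : ∀ v ∈ hexLattice, 0 < ρ v)
    (hΘ : ∀ v ∈ hexLattice, 2 * Real.pi ≤ hexAngleSum ρ v)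
    (hbdd : ∃ M : ℝ, ∀ v ∈ hexLattice, ρ v ≤ M) :
    ∃ c : ℝ, ∀ v ∈ hexLattice, ρ v = c := by
  obtain ⟨M, hM⟩ := hbdd
  set R : ℤ × ℤ → ℝ := ρ ∘ latticePoint
  have excess_nonneg (v : ℤ × ℤ) : 0 ≤ ∑ j, vertexExcess R (hexTriangle j) v := by
    rw [sum_vertexExcess_hexTriangle]
    exact sub_nonneg.2 (hΘ _ (latticePoint_mem_hexLattice v))
  have equal_on_triangles := isParabolicAddGroup_int_prod_int.eq_of_nonneg_vertexExcess
    (fun v ↦ hρ _ (latticePoint_mem_hexLattice v)) (fun v ↦ hM _ (latticePoint_mem_hexLattice v))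
    excess_nonneg
  have periodic_one : R.Periodic (1, 0) := fun v ↦ by
    simpa [R, hexTriangle] using equal_on_triangles 0 v 1 0
  have periodic_ω : R.Periodic (0, 1) := fun v ↦ by
    simpa [R, hexTriangle] using equal_on_triangles 0 v 2 0
  refine ⟨R 0, ?_⟩
  rintro _ ⟨a, b, rfl⟩
  exact apply_eq_apply_zero_of_periodic periodic_one periodic_ω (a, b)
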